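/- Let f = x⁴ + y⁴ + z⁴ + x·y²·z² in ℂ[x,y,z], and let J₁ be the ideal of ℂ[[x,y,z]] generated by the images of the twelve polynomials x·f, y·f, z·f, f − x·∂f/∂x, x·∂f/∂y, x·∂f/∂z, y·∂f/∂x, f − y·∂f/∂y, y·∂f/∂z, z·∂f/∂x, z·∂f/∂y, f − z·∂f/∂z. Then the images of the monomials x³y, x³z, y³z², y²z³, x²y³, x²z³, x²y²z², x·y³z², x·y²z³ in ℂ[[x,y,z]] all belong to J₁. -/

import Mathlib

open MvPolynomial

/-- The canonical ring homomorphism `ℂ[x,y,z] → ℂ[[x,y,z]]`. -/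
noncomputable def ι : MvPolynomial (Fin 3) ℂ →+* MvPowerSeries (Fin 3) ℂ :=
  MvPolynomial.coeToMvPowerSeries.ringHom

/-- The polynomial `f = x⁴ + y⁴ + z⁴ + x·y²·z²` in `ℂ[x,y,z]`. -/
noncomputable def f : MvPolynomial (Fin 3) ℂ :=
  X 0 ^ 4 + X 1 ^ 4 + X 2 ^ 4 + X 0 * X 1 ^ 2 * X 2 ^ 2

/-- The ideal `J₁` of `ℂ[[x,y,z]]` generated by the images of
`x·f, y·f, z·f` and `δ_{ij}·f − xᵢ·(∂f/∂xⱼ)` for `i, j = 1, 2, 3`. -/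
noncomputable def J₁ : Ideal (MvPowerSeries (Fin 3) ℂ) :=
  Ideal.span
    { ι (X 0 * f), ι (X 1 * f), ι (X 2 * f),
      ι (f - X 0 * pderiv 0 f), ι (X 0 * pderiv 1 f), ι (X 0 * pderiv 2 f),
      ι (X 1 * pderiv 0 f), ι (f - X 1 * pderiv 1 f), ι (X 1 * pderiv 2 f),
      ι (X 2 * pderiv 0 f), ι (X 2 * pderiv 1 f), ι (f - X 2 * pderiv 2 f) }

/-!
The relations `z·∂f/∂y` and `y·∂f/∂z` are linear in `y³z` and `yz³`, with determinant `4(4 - x²)`,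
a unit of `ℂ[[x,y,z]]`; hence `y³z` and `yz³` lie in `J₁`. Then `y·∂f/∂x` gives `x³y`, and
`x²·∂f/∂y` gives `x²y³`; exchanging `y` and `z` gives `x³z` and `x²z³`. Finally, `f` fails to be
homogeneous of degree `4` only by its last term, so that Euler's formula reads
`4f - x·∂f/∂x - y·∂f/∂y - z·∂f/∂z = -xy²z²`. Its left side is `f` plus the three generators
`f - xᵢ·∂f/∂xᵢ`, and `x·f` lies in `J₁`, so multiplying by `x` gives `x²y²z²`.
-/

section CommRing

variable {R : Type*} [CommRing R] {I : Ideal R}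

theorem mem_of_isUnit_mul_add_mem {a u v : R} (ha : IsUnit a) (h : a * u + v ∈ I) (hv : v ∈ I) :
    u ∈ I :=
  (I.unit_mul_mem_iff_mem ha).1 ((I.add_mem_iff_left hv).1 h)

theorem mem_of_isUnit_det {a b c d u v : R} (hdet : IsUnit (a * d - b * c))
    (h₁ : a * u + b * v ∈ I) (h₂ : c * u + d * v ∈ I) : u ∈ I := by
  have cramer : (a * d - b * c) * u = d * (a * u + b * v) - b * (c * u + d * v) := by ring
  rw [← I.unit_mul_mem_iff_mem hdet, cramer]
  exact I.sub_mem (I.mul_mem_left d h₁) (I.mul_mem_left b h₂)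

variable {x y z : R}

theorem pow_three_mul_mem (h4 : IsUnit (4 : R)) (hx : IsUnit (4 - x ^ 2))
    (hy : z * (4 * y ^ 3 + 2 * x * y * z ^ 2) ∈ I)
    (hz : y * (4 * z ^ 3 + 2 * x * z * y ^ 2) ∈ I) : y ^ 3 * z ∈ I := by
  have hdet : IsUnit (4 * 4 - 2 * x * (2 * x)) := by
    convert h4.mul hx using 1
    ring
  refine mem_of_isUnit_det (v := y * z ^ 3) hdet ?_ ?_
  · convert hy using 1
    ring
  · convert hz using 1
    ring

theorem pow_three_mul_mem_of_mul_mem (h4 : IsUnit (4 : R))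
    (hx : y * (4 * x ^ 3 + y ^ 2 * z ^ 2) ∈ I) (hyz : y ^ 3 * z ∈ I) : x ^ 3 * y ∈ I := by
  refine mem_of_isUnit_mul_add_mem (v := z * (y ^ 3 * z)) h4 ?_ (I.mul_mem_left z hyz)
  convert hx using 1
  ring

theorem sq_mul_pow_three_mem_of_mul_mem (h4 : IsUnit (4 : R))
    (hy : x * (4 * y ^ 3 + 2 * x * y * z ^ 2) ∈ I) (hxy : x ^ 3 * y ∈ I) :
    x ^ 2 * y ^ 3 ∈ I := by
  refine mem_of_isUnit_mul_add_mem (v := 2 * z ^ 2 * (x ^ 3 * y)) h4 ?_ (I.mul_mem_left _ hxy)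
  convert I.mul_mem_left x hy using 1
  ring

end CommRing

theorem pderiv_zero_f : pderiv 0 f = 4 * X 0 ^ 3 + X 1 ^ 2 * X 2 ^ 2 := by
  simp only [f, map_add, Derivation.leibniz, Derivation.leibniz_pow, pderiv_X, Pi.single_apply,
    smul_eq_mul, nsmul_eq_mul, Nat.cast_ofNat, Fin.reduceEq, if_true, if_false]
  ring

theorem pderiv_one_f : pderiv 1 f = 4 * X 1 ^ 3 + 2 * X 0 * X 1 * X 2 ^ 2 := by
  simp only [f, map_add, Derivation.leibniz, Derivation.leibniz_pow, pderiv_X, Pi.single_apply,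
    smul_eq_mul, nsmul_eq_mul, Nat.cast_ofNat, Fin.reduceEq, if_true, if_false]
  ring

theorem pderiv_two_f : pderiv 2 f = 4 * X 2 ^ 3 + 2 * X 0 * X 2 * X 1 ^ 2 := by
  simp only [f, map_add, Derivation.leibniz, Derivation.leibniz_pow, pderiv_X, Pi.single_apply,
    smul_eq_mul, nsmul_eq_mul, Nat.cast_ofNat, Fin.reduceEq, if_true, if_false]
  ring

theorem f_add_sum_f_sub_X_mul_pderiv :
    f + ∑ i, (f - X i * pderiv i f) = -(X 0 * X 1 ^ 2 * X 2 ^ 2) := by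
  rw [Fin.sum_univ_three, pderiv_zero_f, pderiv_one_f, pderiv_two_f, f]
  ring

theorem X_mul_f_mem_J₁ (i : Fin 3) : ι (X i * f) ∈ J₁ :=
  Ideal.subset_span (by fin_cases i <;> simp)

theorem f_sub_X_mul_pderiv_mem_J₁ (i : Fin 3) : ι (f - X i * pderiv i f) ∈ J₁ :=
  Ideal.subset_span (by fin_cases i <;> simp)

theorem X_mul_pderiv_mem_J₁ {i j : Fin 3} (hij : i ≠ j) : ι (X i * pderiv j f) ∈ J₁ :=
  Ideal.subset_span (by fin_cases i <;> fin_cases j <;> simp_all)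

theorem X_mul_pderiv_zero_mem_J₁ {i : Fin 3} (hi : i ≠ 0) :
    ι (X i) * (4 * ι (X 0) ^ 3 + ι (X 1) ^ 2 * ι (X 2) ^ 2) ∈ J₁ := by
  simpa only [pderiv_zero_f, map_mul, map_add, map_pow, map_ofNat] using X_mul_pderiv_mem_J₁ hi

theorem X_mul_pderiv_one_mem_J₁ {i : Fin 3} (hi : i ≠ 1) :
    ι (X i) * (4 * ι (X 1) ^ 3 + 2 * ι (X 0) * ι (X 1) * ι (X 2) ^ 2) ∈ J₁ := by
  simpa only [pderiv_one_f, map_mul, map_add, map_pow, map_ofNat] using X_mul_pderiv_mem_J₁ hi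

theorem X_mul_pderiv_two_mem_J₁ {i : Fin 3} (hi : i ≠ 2) :
    ι (X i) * (4 * ι (X 2) ^ 3 + 2 * ι (X 0) * ι (X 2) * ι (X 1) ^ 2) ∈ J₁ := by
  simpa only [pderiv_two_f, map_mul, map_add, map_pow, map_ofNat] using X_mul_pderiv_mem_J₁ hi

theorem isUnit_four_sub_X_sq (i : Fin 3) : IsUnit (4 - ι (X i) ^ 2) := by
  simp [MvPowerSeries.isUnit_iff_constantCoeff, ι, map_ofNat MvPowerSeries.constantCoeff]

theorem X_mul_X_sq_mul_X_sq_mem_J₁ (i : Fin 3) :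
    ι (X i * (X 0 * X 1 ^ 2 * X 2 ^ 2)) ∈ J₁ := by
  have h : ι (X i * (f + ∑ j, (f - X j * pderiv j f))) ∈ J₁ := by
    rw [mul_add, map_add, map_mul ι _ (∑ j, _), map_sum]
    exact J₁.add_mem (X_mul_f_mem_J₁ i)
      (J₁.mul_mem_left _ (J₁.sum_mem fun j _ ↦ f_sub_X_mul_pderiv_mem_J₁ j))
  rwa [f_add_sum_f_sub_X_mul_pderiv, mul_neg, map_neg, J₁.neg_mem_iff] at h

theorem stmt_10 :
    ι (X 0 ^ 3 * X 1) ∈ J₁ ∧ ι (X 0 ^ 3 * X 2) ∈ J₁ ∧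
    ι (X 1 ^ 3 * X 2 ^ 2) ∈ J₁ ∧ ι (X 1 ^ 2 * X 2 ^ 3) ∈ J₁ ∧
    ι (X 0 ^ 2 * X 1 ^ 3) ∈ J₁ ∧ ι (X 0 ^ 2 * X 2 ^ 3) ∈ J₁ ∧
    ι (X 0 ^ 2 * X 1 ^ 2 * X 2 ^ 2) ∈ J₁ ∧
    ι (X 0 * X 1 ^ 3 * X 2 ^ 2) ∈ J₁ ∧ ι (X 0 * X 1 ^ 2 * X 2 ^ 3) ∈ J₁ := by
  have h4 : IsUnit (4 : MvPowerSeries (Fin 3) ℂ) := by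
    simp [MvPowerSeries.isUnit_iff_constantCoeff, map_ofNat MvPowerSeries.constantCoeff]
  have hu := isUnit_four_sub_X_sq 0
  have hz_fy := X_mul_pderiv_one_mem_J₁ (i := 2) (by decide)
  have hy_fz := X_mul_pderiv_two_mem_J₁ (i := 1) (by decide)
  have hyz : ι (X 1) ^ 3 * ι (X 2) ∈ J₁ := pow_three_mul_mem h4 hu hz_fy hy_fz
  have hzy : ι (X 2) ^ 3 * ι (X 1) ∈ J₁ := pow_three_mul_mem h4 hu hy_fz hz_fy
  have hxy : ι (X 0) ^ 3 * ι (X 1) ∈ J₁ :=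
    pow_three_mul_mem_of_mul_mem h4 (X_mul_pderiv_zero_mem_J₁ (by decide)) hyz
  have hxz : ι (X 0) ^ 3 * ι (X 2) ∈ J₁ :=
    pow_three_mul_mem_of_mul_mem h4
      (by rw [mul_comm (ι (X 2) ^ 2)]; exact X_mul_pderiv_zero_mem_J₁ (by decide)) hzy
  have hxxy := sq_mul_pow_three_mem_of_mul_mem h4 (X_mul_pderiv_one_mem_J₁ (by decide)) hxy
  have hxxz := sq_mul_pow_three_mem_of_mul_mem h4 (X_mul_pderiv_two_mem_J₁ (by decide)) hxz
  have hxyz : ι (X 0 ^ 2 * X 1 ^ 2 * X 2 ^ 2) ∈ J₁ := by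
    convert X_mul_X_sq_mul_X_sq_mem_J₁ 0 using 2
    ring
  simp only [map_mul, map_pow] at hxyz ⊢
  exact ⟨hxy, hxz, J₁.mem_of_dvd ⟨ι (X 2), by ring⟩ hyz, J₁.mem_of_dvd ⟨ι (X 1), by ring⟩ hzy,
    hxxy, hxxz, hxyz, J₁.mem_of_dvd ⟨ι (X 0) * ι (X 2), by ring⟩ hyz,
    J₁.mem_of_dvd ⟨ι (X 0) * ι (X 1), by ring⟩ hzy⟩
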